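/- Let F be an √−1ℝ-valued 2-form on ℝ⁸ = ℂ⁴ satisfying F(Ju,Jv) = F(u,v) for all u,v (equivalently, the (0,2)-part of F vanishes). Then F is a deformed Hermitian Yang–Mills curvature with phase 1, i.e. Im( (ω + F)⁴ ) = 0, if and only if ( F + (1/6)·*F³ ) + *( ( F + (1/6)·*F³ ) ∧ Φ ) = 0, where Φ = ω²/2 + Re Ω (this is the Spin(7) deformed Donaldson–Thomas equation π²₇( F + (1/6)·*F³ ) = 0 for the Cayley form Φ). -/

import Mathlib

open scoped BigOperators

noncomputable section

namespace FMpaper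

variable {K : Type*} [NormedField K] [NormedAlgebra ℝ K]

/-- Coefficient model for the exterior algebra of `(ℝⁿ)*` with scalars in `K`:
a form is given by its coefficients on the basis `e^S`, `S ⊆ {0, …, n-1}` sorted. -/
abbrev Form (K : Type*) (n : ℕ) := Finset (Fin n) → K

variable {n : ℕ}

/-- Sign such that `e^s ∧ e^t = signMerge s t • e^(s ∪ t)` for disjoint sorted `s, t`. -/
def signMerge (s t : Finset (Fin n)) : K :=
  (-1 : K) ^ (((s ×ˢ t).filter (fun p => p.2 < p.1)).card)

/-- Wedge product. -/
def wedge (α β : Form K n) : Form K n :=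
  fun u => ∑ s ∈ u.powerset, signMerge s (u \ s) * α s * β (u \ s)

/-- Hodge star operator (for the standard inner product and orientation `e^{0⋯(n-1)}`). -/
def hstar (α : Form K n) : Form K n :=
  fun t => signMerge tᶜ t * α tᶜ

/-- Interior product with the basis vector `e_μ`. -/
def iprodB (μ : Fin n) (α : Form K n) : Form K n :=
  fun t => if μ ∈ t then 0
    else (-1 : K) ^ ((t.filter (fun j => j < μ)).card) * α (insert μ t)

/-- Interior product with the vector `v`. -/
def iprod (v : Fin n → K) (α : Form K n) : Form K n :=
  fun t => ∑ μ, v μ * iprodB μ α t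

/-- The basis covector `e^i` as a 1-form. -/
def e1 (i : Fin n) : Form K n := fun s => if s = {i} then 1 else 0

/-- The covector `v♭` dual to a vector `v`. -/
def flat (v : Fin n → K) : Form K n := ∑ i, v i • e1 i

/-- The vector `α♯` dual to a 1-form `α`. -/
def sharp1 (α : Form K n) : Fin n → K := fun i => α {i}

/-- The inner product of forms (extended `K`-bilinearly). -/
def inner' (α β : Form K n) : K := ∑ s, α s * β s

/-- The (Euclidean) norm of a form; for an `√-1 ℝ`-valued form `√-1 γ` this is `‖γ‖`. -/
def fnorm (α : Form K n) : ℝ := Real.sqrt (∑ s, ‖α s‖ ^ 2)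

/-- `α` is homogeneous of degree `k`. -/
def isGrade (k : ℕ) (α : Form K n) : Prop := ∀ s, s.card ≠ k → α s = 0

/-- Evaluation of a `k`-form on `k` vectors. -/
def evalForm {k : ℕ} (α : Form K n) (v : Fin k → (Fin n → K)) : K :=
  ∑ s : Finset (Fin n), α s *
    (if h : s.card = k then
      Matrix.det (Matrix.of fun i j => v i ((s.orderIsoOfFin h j : Fin n))) else 0)

/-- The matrix of the skew-symmetric endomorphism `γ♯` associated with a 2-form `γ`
via `⟨γ♯ u, v⟩ = γ(u, v)`. -/
def mat2 (γ : Form K n) : Matrix (Fin n) (Fin n) K :=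
  Matrix.of fun i j => if i < j then γ {i, j} else if j < i then - γ {i, j} else 0

/-- The standard `G₂` 3-form `φ = e^{123}+e^{145}+e^{167}+e^{246}−e^{257}−e^{347}−e^{356}`
on `ℝ⁷` (indices `1, …, 7` shifted to `0, …, 6`). -/
def phi7 : Form K 7 := fun s =>
  if s = ({0, 1, 2} : Finset (Fin 7)) then 1
  else if s = ({0, 3, 4} : Finset (Fin 7)) then 1
  else if s = ({0, 5, 6} : Finset (Fin 7)) then 1
  else if s = ({1, 3, 5} : Finset (Fin 7)) then 1
  else if s = ({1, 4, 6} : Finset (Fin 7)) then -1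
  else if s = ({2, 3, 6} : Finset (Fin 7)) then -1
  else if s = ({2, 4, 5} : Finset (Fin 7)) then -1
  else 0

/-- `*₇φ = e^{4567}+e^{2367}+e^{2345}+e^{1357}−e^{1346}−e^{1256}−e^{1247}` on `ℝ⁷`. -/
def psi7 : Form K 7 := fun s =>
  if s = ({3, 4, 5, 6} : Finset (Fin 7)) then 1
  else if s = ({1, 2, 5, 6} : Finset (Fin 7)) then 1
  else if s = ({1, 2, 3, 4} : Finset (Fin 7)) then 1
  else if s = ({0, 2, 4, 6} : Finset (Fin 7)) then 1
  else if s = ({0, 2, 3, 5} : Finset (Fin 7)) then -1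
  else if s = ({0, 1, 4, 5} : Finset (Fin 7)) then -1
  else if s = ({0, 1, 3, 6} : Finset (Fin 7)) then -1
  else 0

/-- The `G₂` 3-form `φ` on `V = span{e₁, …, e₇} ⊂ ℝ⁸`, regarded as a form on `ℝ⁸`
annihilated by `i(e₀)` (indices `1, …, 7` of `ℝ⁸`). -/
def phi8 : Form K 8 := fun s =>
  if s = ({1, 2, 3} : Finset (Fin 8)) then 1
  else if s = ({1, 4, 5} : Finset (Fin 8)) then 1
  else if s = ({1, 6, 7} : Finset (Fin 8)) then 1
  else if s = ({2, 4, 6} : Finset (Fin 8)) then 1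
  else if s = ({2, 5, 7} : Finset (Fin 8)) then -1
  else if s = ({3, 4, 7} : Finset (Fin 8)) then -1
  else if s = ({3, 5, 6} : Finset (Fin 8)) then -1
  else 0

/-- `*₇φ` on `V ⊂ ℝ⁸`, regarded as a 4-form on `ℝ⁸` annihilated by `i(e₀)`. -/
def psi8 : Form K 8 := fun s =>
  if s = ({4, 5, 6, 7} : Finset (Fin 8)) then 1
  else if s = ({2, 3, 6, 7} : Finset (Fin 8)) then 1
  else if s = ({2, 3, 4, 5} : Finset (Fin 8)) then 1
  else if s = ({1, 3, 5, 7} : Finset (Fin 8)) then 1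
  else if s = ({1, 3, 4, 6} : Finset (Fin 8)) then -1
  else if s = ({1, 2, 5, 6} : Finset (Fin 8)) then -1
  else if s = ({1, 2, 4, 7} : Finset (Fin 8)) then -1
  else 0

/-- The standard Cayley 4-form `Φ = e⁰ ∧ φ + *₇φ` on `ℝ⁸`. -/
def Phi8 : Form K 8 := wedge (e1 0) phi8 + psi8

/-- The index set of `V = span{e₁, …, e₇} ⊂ ℝ⁸`. -/
def Vset : Finset (Fin 8) := {1, 2, 3, 4, 5, 6, 7}

/-- The Hodge star `*₇` of `V ⊂ ℝ⁸` (volume form `e^{1⋯7}`), acting on forms on `ℝ⁸`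
annihilated by `i(e₀)`. -/
def star7 (α : Form K 8) : Form K 8 :=
  fun t => if (0 : Fin 8) ∈ t then 0 else signMerge (Vset \ t) t * α (Vset \ t)

/-- `α` is (the pullback of) a form on `V`, i.e. `i(e₀) α = 0`. -/
def onV (α : Form K 8) : Prop := ∀ s, (0 : Fin 8) ∈ s → α s = 0

/-- `λ²(α) = ½ (e⁰ ∧ α + i(α♯) φ)` for `α ∈ V*`. -/
def lambda2 (α : Form K 8) : Form K 8 :=
  (2 : K)⁻¹ • (wedge (e1 0) α + iprod (sharp1 α) phi8)

/-- `λ⁴(α) = (1/√8) (e⁰ ∧ i(α♯) *₇φ − α ∧ φ)` for `α ∈ V*`. -/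
def lambda4 (α : Form K 8) : Form K 8 :=
  (algebraMap ℝ K (Real.sqrt 8))⁻¹ • (wedge (e1 0) (iprod (sharp1 α) psi8) - wedge α phi8)

/-- `λ⁶(α) = *₈ λ²(α)` for `α ∈ V*`. -/
def lambda6 (α : Form K 8) : Form K 8 := hstar (lambda2 α)

/-- The projection `π²₇(α) = (α + *₈(Φ ∧ α))/4` onto `Λ²₇`. -/
def pi27 (α : Form K 8) : Form K 8 := (4 : K)⁻¹ • (α + hstar (wedge Phi8 α))

/-- The projection `π⁴₇(β) = Σ_{μ=1}^{7} ⟨β, λ⁴(e^μ)⟩ λ⁴(e^μ)` onto `Λ⁴₇`. -/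
def pi47 (β : Form K 8) : Form K 8 :=
  ∑ μ : Fin 7, inner' β (lambda4 (e1 μ.succ)) • lambda4 (e1 μ.succ)

/-- `τ(u₀,u₁,u₂,u₃) = Σ_{μ=1}^{7} λ⁴(e^μ)(u₀,u₁,u₂,u₃) ⬝ λ⁴(e^μ) = π⁴₇(u₀♭∧u₁♭∧u₂♭∧u₃♭)`. -/
def tau4 (u : Fin 4 → (Fin 8 → K)) : Form K 8 :=
  ∑ μ : Fin 7, evalForm (lambda4 (e1 μ.succ)) u • lambda4 (e1 μ.succ)

/-- Partial derivative `∂f^a/∂x^j` at `x`. -/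
def pd {m p : ℕ} (f : (Fin m → ℝ) → (Fin p → ℝ)) (x : Fin m → ℝ) (j : Fin m) (a : Fin p) : ℝ :=
  fderiv ℝ f x (Pi.single j 1) a


/-! The Calabi–Yau structure of `ℝ⁸ = ℂ⁴` with complex coordinates
`z^k = x^{2k-2} + √-1 x^{2k-1}`. -/

/-- The standard Kähler form `ω = e^{01} + e^{23} + e^{45} + e^{67}`. -/
def omegaCY : Form ℂ 8 := fun s =>
  if s = ({0, 1} : Finset (Fin 8)) then 1
  else if s = ({2, 3} : Finset (Fin 8)) then 1
  else if s = ({4, 5} : Finset (Fin 8)) then 1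
  else if s = ({6, 7} : Finset (Fin 8)) then 1
  else 0

/-- The index of `x^{2k-2}` (0-indexed: `x^{2k}`). -/
def zr (k : Fin 4) : Fin 8 := ⟨2 * k.1, by have := k.isLt; omega⟩

/-- The index of `x^{2k-1}` (0-indexed: `x^{2k+1}`). -/
def zi (k : Fin 4) : Fin 8 := ⟨2 * k.1 + 1, by have := k.isLt; omega⟩

/-- `dz^k = dx^{2k-2} + √-1 dx^{2k-1}`. -/
def dzf (k : Fin 4) : Form ℂ 8 := e1 (zr k) + Complex.I • e1 (zi k)

/-- The standard holomorphic volume form `Ω = dz¹ ∧ dz² ∧ dz³ ∧ dz⁴`. -/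
def OmegaCY : Form ℂ 8 := wedge (dzf 0) (wedge (dzf 1) (wedge (dzf 2) (dzf 3)))

/-- The real 4-form `Re Ω`. -/
def ReOmegaCY : Form ℂ 8 := fun s => ((OmegaCY s).re : ℂ)

/-- The Spin(7) (Cayley) 4-form `Φ = ω²/2 + Re Ω` on the Calabi–Yau 4-fold `ℂ⁴`. -/
def PhiCY : Form ℂ 8 := (2 : ℂ)⁻¹ • wedge omegaCY omegaCY + ReOmegaCY

/-- The standard complex structure `J` of `ℂ⁴` acting on (complexified) vectors. -/
def Jv (v : Fin 8 → ℂ) : Fin 8 → ℂ := fun i =>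
  if _h : (i : ℕ) % 2 = 0 then - v ⟨(i : ℕ) + 1, by have := i.isLt; omega⟩
  else v ⟨(i : ℕ) - 1, by have := i.isLt; omega⟩


def Sm (m : ℕ) : Finset (Fin 8) := Finset.univ.filter (fun i => m / 2 ^ (i : ℕ) % 2 = 1)

def prs : List (ℕ × ℕ) :=
  [(0,1),(0,2),(0,3),(0,4),(0,5),(0,6),(0,7),(1,2),(1,3),(1,4),(1,5),(1,6),(1,7),
   (2,3),(2,4),(2,5),(2,6),(2,7),(3,4),(3,5),(3,6),(3,7),(4,5),(4,6),(4,7),(5,6),(5,7),(6,7)]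

/-- number of bits of `m` -/
def pop (m : ℕ) : ℕ :=
  m % 2 + m / 2 % 2 + m / 4 % 2 + m / 8 % 2 + m / 16 % 2 + m / 32 % 2 + m / 64 % 2 + m / 128 % 2

/-- sign exponent of moving bit `i` to the front of `m` -/
def low (m i : ℕ) : ℕ := pop (m % 2 ^ i)

def ok (m : ℕ) (p : ℕ × ℕ) : Bool := m / 2 ^ p.1 % 2 = 1 ∧ m / 2 ^ p.2 % 2 = 1

def sg (n : ℕ) : ℤ := if n % 2 = 0 then 1 else -1

lemma sg_eq (n : ℕ) : ((sg n : ℤ) : ℂ) = (-1) ^ n := by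
  unfold sg
  split_ifs with h
  · rw [Even.neg_one_pow (Nat.even_iff.2 h)]; simp
  · rw [Odd.neg_one_pow (Nat.odd_iff.2 (by omega))]; simp

lemma sm_pair : ((Finset.univ : Finset (Fin 8)).powersetCard 2) =
    (prs.map (fun p => Sm (2 ^ p.1 + 2 ^ p.2))).toFinset := by decide +kernel

lemma sm_pair_nodup : (prs.map (fun p => Sm (2 ^ p.1 + 2 ^ p.2))).Nodup := by decide +kernel

lemma key2 : ∀ m : Fin 256, ∀ p ∈ prs, (Sm (2 ^ p.1 + 2 ^ p.2) ⊆ Sm m ↔ ok m p = true) ∧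
    (ok m p = true → Sm m \ Sm (2 ^ p.1 + 2 ^ p.2) = Sm (m - 2 ^ p.1 - 2 ^ p.2) ∧
     (((Sm (2 ^ p.1 + 2 ^ p.2) ×ˢ (Sm (m - 2 ^ p.1 - 2 ^ p.2))).filter (fun q => q.2 < q.1)).card) % 2
      = (low m p.1 + low m p.2 + 1) % 2) := by
  decide +kernel

lemma keyh : ∀ p ∈ prs, (Sm (2 ^ p.1 + 2 ^ p.2))ᶜ = Sm (255 - 2 ^ p.1 - 2 ^ p.2) ∧
     (((Sm (255 - 2 ^ p.1 - 2 ^ p.2) ×ˢ Sm (2 ^ p.1 + 2 ^ p.2)).filter (fun q => q.2 < q.1)).card) % 2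
      = (p.1 + p.2 + 1) % 2 := by
  decide +kernel


lemma sg_congr {a b : ℕ} (h : a % 2 = b % 2) : (-1 : ℂ) ^ a = ((sg b : ℤ) : ℂ) := by
  rw [← sg_eq]; unfold sg; rw [h]

lemma sum_pairs (f : Finset (Fin 8) → ℂ) (hf : ∀ s, s.card ≠ 2 → f s = 0) :
    ∑ s, f s = (prs.map (fun p => f (Sm (2 ^ p.1 + 2 ^ p.2)))).sum := by
  have h1 : ∑ s, f s = ∑ s ∈ (Finset.univ : Finset (Fin 8)).powersetCard 2, f s := by
    symm
    apply Finset.sum_subset (Finset.subset_univ _)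
    intro s _ hs
    apply hf
    intro h
    exact hs (by simp [Finset.mem_powersetCard, h])
  rw [h1, sm_pair, List.sum_toFinset _ sm_pair_nodup, List.map_map]
  rfl

def term2 (α β : Form ℂ 8) (m : ℕ) (p : ℕ × ℕ) : ℂ :=
  if m / 2 ^ p.1 % 2 = 1 ∧ m / 2 ^ p.2 % 2 = 1 then
    ((sg (low m p.1 + low m p.2 + 1) : ℤ) : ℂ) * α (Sm (2 ^ p.1 + 2 ^ p.2)) *
      β (Sm (m - 2 ^ p.1 - 2 ^ p.2)) else 0

lemma wedge2 (α β : Form ℂ 8) (hα : isGrade 2 α) (m : ℕ) (hm : m < 256) :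
    wedge α β (Sm m) = (prs.map (term2 α β m)).sum := by
  have h1 : wedge α β (Sm m) = ∑ s, if s ⊆ Sm m then
      (signMerge s (Sm m \ s) * α s * β (Sm m \ s) : ℂ) else 0 := by
    unfold wedge
    rw [← Finset.sum_filter]
    apply Finset.sum_congr _ (fun _ _ => rfl)
    ext s; simp
  rw [h1, sum_pairs]
  · apply congrArg
    apply List.map_congr_left
    intro p hp
    obtain ⟨h2, h3⟩ := key2 ⟨m, hm⟩ p hp
    simp only [] at h2 h3
    unfold term2
    by_cases h : ok m p = true
    · rw [if_pos (h2.2 h), if_pos (by simpa [ok] using h), (h3 h).1]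
      unfold signMerge
      rw [sg_congr (h3 h).2]
    · rw [if_neg (fun h' => h (h2.1 h')), if_neg (by simpa [ok] using h)]
  · intro s hs
    rw [hα s hs]; simp

lemma hstar2 (β : Form ℂ 8) (p : ℕ × ℕ) (hp : p ∈ prs) :
    hstar β (Sm (2 ^ p.1 + 2 ^ p.2)) =
      ((sg (p.1 + p.2 + 1) : ℤ) : ℂ) * β (Sm (255 - 2 ^ p.1 - 2 ^ p.2)) := by
  obtain ⟨h1, h2⟩ := keyh p hp
  unfold hstar signMerge
  rw [h1, sg_congr h2]

lemma isGrade_wedge {j k : ℕ} {α β : Form ℂ 8} (hα : isGrade j α) (hβ : isGrade k β) :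
    isGrade (j + k) (wedge α β) := by
  intro u hu
  unfold wedge
  apply Finset.sum_eq_zero
  intro s hs
  by_cases h : s.card = j
  · rw [hβ (u \ s) ?_]; · simp
    intro h'
    apply hu
    rw [Finset.card_sdiff_of_subset (Finset.mem_powerset.1 hs)] at h'
    have := Finset.card_le_card (Finset.mem_powerset.1 hs)
    omega
  · rw [hα s h]; simp

lemma isGrade_hstar {j k : ℕ} {α : Form ℂ 8} (hα : isGrade j α) (h : j + k = 8) :
    isGrade k (hstar α) := by
  intro u hu
  unfold hstar
  rw [hα _ ?_]; · simp
  rw [Finset.card_compl]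
  have := Finset.card_le_univ u
  simp only [Fintype.card_fin] at *
  omega

lemma isGrade_add {j : ℕ} {α β : Form ℂ 8} (hα : isGrade j α) (hβ : isGrade j β) :
    isGrade j (α + β) := by
  intro u hu
  simp [hα u hu, hβ u hu]

lemma isGrade_smul {j : ℕ} {α : Form ℂ 8} (c : ℂ) (hα : isGrade j α) :
    isGrade j (c • α) := by
  intro u hu
  simp [hα u hu]

lemma isGrade_e1 (i : Fin 8) : isGrade 1 (e1 i : Form ℂ 8) := by
  intro u hu
  unfold e1
  rw [if_neg]
  rintro rfl
  simp at hu

lemma isGrade_dzf (k : Fin 4) : isGrade 1 (dzf k) :=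
  isGrade_add (isGrade_e1 _) (isGrade_smul _ (isGrade_e1 _))

lemma isGrade_OmegaCY : isGrade 4 OmegaCY :=
  isGrade_wedge (isGrade_dzf 0) (isGrade_wedge (isGrade_dzf 1)
    (isGrade_wedge (isGrade_dzf 2) (isGrade_dzf 3)))

lemma isGrade_omegaCY : isGrade 2 omegaCY := by
  intro u hu
  unfold omegaCY
  split_ifs with h1 h2 h3 h4
  all_goals first | rfl | (subst_vars; exact absurd (by decide) hu)

lemma isGrade_PhiCY : isGrade 4 PhiCY := by
  apply isGrade_add
  · exact isGrade_smul _ (isGrade_wedge isGrade_omegaCY isGrade_omegaCY)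
  · intro u hu
    simp [ReOmegaCY, isGrade_OmegaCY u hu]

lemma key1 : ∀ m : Fin 256, ∀ i : Fin 8, i ∈ Sm m →
    Sm m \ {i} = Sm (m - 2 ^ (i : ℕ)) ∧
     ((({i} ×ˢ (Sm (m - 2 ^ (i : ℕ)))).filter (fun q => q.2 < q.1)).card) % 2
      = (low m i) % 2 := by
  decide +kernel

lemma wedge_e1 (i : Fin 8) (β : Form ℂ 8) (m : ℕ) (hm : m < 256) :
    wedge (e1 i) β (Sm m) = if m / 2 ^ (i : ℕ) % 2 = 1 then
      ((sg (low m i) : ℤ) : ℂ) * β (Sm (m - 2 ^ (i : ℕ))) else 0 := by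
  unfold wedge e1
  have hmem : i ∈ Sm m ↔ m / 2 ^ (i : ℕ) % 2 = 1 := by simp [Sm]
  split_ifs with h
  · rw [Finset.sum_eq_single {i}]
    · obtain ⟨h1, h2⟩ := key1 ⟨m, hm⟩ i (hmem.2 h)
      simp only [] at h1 h2
      unfold signMerge
      rw [h1, sg_congr h2]; simp
    · intro s _ hs
      simp [hs]
    · intro h'
      exact absurd (by simpa using hmem.2 h) h'
  · apply Finset.sum_eq_zero
    intro s hs
    rw [if_neg]; · simp
    rintro rfl
    exact h (hmem.1 (by simpa using hs))

lemma wedge_add_left (α β γ : Form ℂ 8) : wedge (α + β) γ = wedge α γ + wedge β γ := by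
  funext u
  simp only [wedge, Pi.add_apply, ← Finset.sum_add_distrib]
  exact Finset.sum_congr rfl (fun _ _ => by ring)

lemma wedge_smul_left (c : ℂ) (α γ : Form ℂ 8) : wedge (c • α) γ = c • wedge α γ := by
  funext u
  simp only [wedge, Pi.smul_apply, smul_eq_mul, Finset.mul_sum]
  exact Finset.sum_congr rfl (fun _ _ => by ring)

lemma evalForm2 (F : Form ℂ 8) (v w : Fin 8 → ℂ) :
    evalForm F ![v, w] = (prs.map (fun p => F (Sm (2 ^ p.1 + 2 ^ p.2)) *
      (v (Fin.ofNat 8 p.1) * w (Fin.ofNat 8 p.2) - v (Fin.ofNat 8 p.2) * w (Fin.ofNat 8 p.1)))).sum := by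
  unfold evalForm
  rw [sum_pairs]
  · apply congrArg
    apply List.map_congr_left
    intro p hp
    have hc : (Sm (2 ^ p.1 + 2 ^ p.2)).card = 2 := by revert p; decide +kernel
    rw [dif_pos hc]
    have hu : ∀ j, (((Sm (2 ^ p.1 + 2 ^ p.2)).orderIsoOfFin hc j : Fin 8)) =
        (![Fin.ofNat 8 p.1, Fin.ofNat 8 p.2] : Fin 2 → Fin 8) j := by
      intro j
      have := Finset.orderEmbOfFin_unique hc
        (f := (![Fin.ofNat 8 p.1, Fin.ofNat 8 p.2] : Fin 2 → Fin 8))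
        (by clear hc j; revert p; decide +kernel)
        (by
          have : (![Fin.ofNat 8 p.1, Fin.ofNat 8 p.2] : Fin 2 → Fin 8) 0 <
            (![Fin.ofNat 8 p.1, Fin.ofNat 8 p.2] : Fin 2 → Fin 8) 1 := by
              clear hc j; revert p; decide +kernel
          rw [Fin.strictMono_iff_lt_succ]
          intro i
          fin_cases i
          exact this)
      rw [this]; rfl
    congr 1
    simp only [hu]
    rw [Matrix.det_fin_two]
    simp
  · intro s hs
    simp [hs]

lemma sm_om : ∀ m : Fin 256, (Sm m = {0, 1} ↔ (m : ℕ) = 3) ∧ (Sm m = {2, 3} ↔ (m : ℕ) = 12) ∧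
    (Sm m = {4, 5} ↔ (m : ℕ) = 48) ∧ (Sm m = {6, 7} ↔ (m : ℕ) = 192) := by decide +kernel

lemma om_val (m : ℕ) (hm : m < 256) : omegaCY (Sm m) = if m = 3 then 1 else if m = 12 then 1
    else if m = 48 then 1 else if m = 192 then 1 else 0 := by
  obtain ⟨h1, h2, h3, h4⟩ := sm_om ⟨m, hm⟩
  simp only [] at h1 h2 h3 h4
  simp only [omegaCY, h1, h2, h3, h4]

lemma sm_one : ∀ m : Fin 256, ∀ i : Fin 8, (Sm m = {i} ↔ (m : ℕ) = 2 ^ (i : ℕ)) := by decide +kernel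

lemma e1_val (i : Fin 8) (m : ℕ) (hm : m < 256) :
    (e1 i : Form ℂ 8) (Sm m) = if m = 2 ^ (i : ℕ) then 1 else 0 := by
  simp only [e1, sm_one ⟨m, hm⟩ i]

def ms4 : List ℕ := [15, 23, 27, 29, 30, 39, 43, 45, 46, 51, 53, 54, 57, 58, 60, 71, 75, 77, 78,
  83, 85, 86, 89, 90, 92, 99, 101, 102, 105, 106, 108, 113, 114, 116, 120, 135, 139, 141, 142, 147,
  149, 150, 153, 154, 156, 163, 165, 166, 169, 170, 172, 177, 178, 180, 184, 195, 197, 198, 201,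
  202, 204, 209, 210, 212, 216, 225, 226, 228, 232, 240]


def tl (m : ℕ) : List (ℤ × ℕ × ℕ) := (prs.filter (ok m)).map (fun p =>
  (sg (low m p.1 + low m p.2 + 1), 2 ^ p.1 + 2 ^ p.2, m - 2 ^ p.1 - 2 ^ p.2))

lemma wedge_tl (α β : Form ℂ 8) (hα : isGrade 2 α) (m : ℕ) (hm : m < 256) :
    wedge α β (Sm m) = ((tl m).map (fun q => (q.1 : ℂ) * α (Sm q.2.1) * β (Sm q.2.2))).sum := by
  rw [wedge2 α β hα m hm, tl]
  generalize prs = l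
  induction l with
  | nil => simp
  | cons p l ih =>
    rw [List.map_cons, List.sum_cons, ih, List.filter_cons]
    by_cases h : ok m p = true
    · rw [if_pos h, term2, if_pos (by simpa [ok] using h)]; simp
    · rw [if_neg h, term2, if_neg (by simpa [ok] using h)]; simp

def omZ (m : ℕ) : ℤ := if m = 3 then 1 else if m = 12 then 1
    else if m = 48 then 1 else if m = 192 then 1 else 0

lemma om_valZ (m : ℕ) (hm : m < 256) : omegaCY (Sm m) = ((omZ m : ℤ) : ℂ) := by
  rw [om_val m hm, omZ]; push_cast; rfl

lemma cast_sum {ι : Type} (l : List ι) (f : ι → ℤ) :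
    (((l.map f).sum : ℤ) : ℂ) = (l.map (fun i => ((f i : ℤ) : ℂ))).sum := by
  induction l with
  | nil => simp
  | cons a l ih => simp [ih]

lemma tl_lt : ∀ m : Fin 256, ∀ q ∈ tl m, q.2.1 < 256 ∧ q.2.2 < 256 := by decide +kernel

lemma om2_val (m : ℕ) (hm : m < 256) : wedge omegaCY omegaCY (Sm m) =
    ((((tl m).map (fun q => q.1 * omZ q.2.1 * omZ q.2.2)).sum : ℤ) : ℂ) := by
  rw [wedge_tl _ _ isGrade_omegaCY m hm, cast_sum]
  congr 1
  apply List.map_congr_left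
  intro q hq
  obtain ⟨h1, h2⟩ := tl_lt ⟨m, hm⟩ q hq
  rw [om_valZ _ h1, om_valZ _ h2]; push_cast; rfl

def toC (z : ℤ × ℤ) : ℂ := ((z.1 : ℤ) : ℂ) + ((z.2 : ℤ) : ℂ) * Complex.I

def eW (i : ℕ) (b : ℕ → ℤ × ℤ) (m : ℕ) : ℤ × ℤ :=
  if m / 2 ^ i % 2 = 1 then (sg (low m i) * (b (m - 2 ^ i)).1, sg (low m i) * (b (m - 2 ^ i)).2)
  else (0, 0)

def dzW (k : ℕ) (b : ℕ → ℤ × ℤ) (m : ℕ) : ℤ × ℤ :=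
  ((eW (2 * k) b m).1 - (eW (2 * k + 1) b m).2, (eW (2 * k) b m).2 + (eW (2 * k + 1) b m).1)

lemma eW_val (i : Fin 8) (β : Form ℂ 8) (b : ℕ → ℤ × ℤ)
    (h : ∀ m < 256, β (Sm m) = toC (b m)) :
    ∀ m < 256, wedge (e1 i) β (Sm m) = toC (eW i b m) := by
  intro m hm
  rw [wedge_e1 i β m hm, eW]
  split_ifs
  · rw [h _ (lt_of_le_of_lt (Nat.sub_le _ _) hm)]; simp only [toC]; push_cast; ring
  · simp [toC]

lemma dzW_val (k : Fin 4) (β : Form ℂ 8) (b : ℕ → ℤ × ℤ)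
    (h : ∀ m < 256, β (Sm m) = toC (b m)) :
    ∀ m < 256, wedge (dzf k) β (Sm m) = toC (dzW k b m) := by
  intro m hm
  rw [dzf, wedge_add_left, wedge_smul_left, Pi.add_apply, Pi.smul_apply,
    eW_val _ β b h m hm, eW_val _ β b h m hm]
  simp only [zr, zi, dzW, toC, smul_eq_mul]
  push_cast
  linear_combination (((eW (2 * k + 1) b m).2 : ℤ) : ℂ) * Complex.I_mul_I

def OmZ : ℕ → ℤ × ℤ := dzW 0 (dzW 1 (dzW 2 (fun m =>
  (if m = 64 then 1 else 0, if m = 128 then 1 else 0))))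

lemma Om_val (m : ℕ) (hm : m < 256) : OmegaCY (Sm m) = toC (OmZ m) := by
  unfold OmegaCY OmZ
  refine dzW_val 0 _ _ (dzW_val 1 _ _ (dzW_val 2 _ _ ?_)) m hm
  intro m hm
  simp [dzf, e1_val _ m hm, toC, zr, zi]

def ph (m : ℕ) : ℤ :=
  if m = 15 ∨ m = 51 ∨ m = 195 ∨ m = 60 ∨ m = 204 ∨ m = 240 ∨ m = 85 ∨ m = 170 then 1
  else if m = 90 ∨ m = 102 ∨ m = 150 ∨ m = 105 ∨ m = 153 ∨ m = 165 then -1 else 0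

lemma ph_eq : ∀ m : Fin 256, 2 * ph m =
    ((tl m).map (fun q => q.1 * omZ q.2.1 * omZ q.2.2)).sum + 2 * (OmZ m).1 := by decide +kernel

lemma Phi_val (m : ℕ) (hm : m < 256) : PhiCY (Sm m) = ((ph m : ℤ) : ℂ) := by
  have h := congrArg (fun z : ℤ => (z : ℂ)) (ph_eq ⟨m, hm⟩)
  simp only [] at h
  rw [Int.cast_add, ← om2_val m hm] at h
  push_cast at h
  have : ReOmegaCY (Sm m) = (((OmZ m).1 : ℤ) : ℂ) := by
    rw [ReOmegaCY, Om_val m hm]; simp [toC]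
  simp only [PhiCY, Pi.add_apply, Pi.smul_apply, this, smul_eq_mul]
  linear_combination (-1/2 : ℂ) * h

def Jinv (F : Form ℂ 8) : Prop :=
  F (Sm 5) = F (Sm 10) ∧
  F (Sm 9) = - F (Sm 6) ∧
  F (Sm 17) = F (Sm 34) ∧
  F (Sm 33) = - F (Sm 18) ∧
  F (Sm 65) = F (Sm 130) ∧
  F (Sm 129) = - F (Sm 66) ∧
  F (Sm 20) = F (Sm 40) ∧
  F (Sm 36) = - F (Sm 24) ∧
  F (Sm 68) = F (Sm 136) ∧
  F (Sm 132) = - F (Sm 72) ∧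
  F (Sm 80) = F (Sm 160) ∧
  F (Sm 144) = - F (Sm 96)

lemma Jrel (F : Form ℂ 8)
    (hJ : ∀ v w : Fin 8 → ℂ, evalForm F ![Jv v, Jv w] = evalForm F ![v, w]) : Jinv F := by
  simp only [evalForm2] at hJ
  have aux : ∀ i j : Fin 8, _ := fun i j => hJ (Pi.single i 1) (Pi.single j 1)
  refine ⟨?_, ?_, ?_, ?_, ?_, ?_, ?_, ?_, ?_, ?_, ?_, ?_⟩
  · simpa [prs, Jv, Pi.single_apply, Fin.ext_iff, Fin.ofNat] using (aux 0 2).symm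
  · simpa [prs, Jv, Pi.single_apply, Fin.ext_iff, Fin.ofNat] using (aux 0 3).symm
  · simpa [prs, Jv, Pi.single_apply, Fin.ext_iff, Fin.ofNat] using (aux 0 4).symm
  · simpa [prs, Jv, Pi.single_apply, Fin.ext_iff, Fin.ofNat] using (aux 0 5).symm
  · simpa [prs, Jv, Pi.single_apply, Fin.ext_iff, Fin.ofNat] using (aux 0 6).symm
  · simpa [prs, Jv, Pi.single_apply, Fin.ext_iff, Fin.ofNat] using (aux 0 7).symm
  · simpa [prs, Jv, Pi.single_apply, Fin.ext_iff, Fin.ofNat] using (aux 2 4).symm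
  · simpa [prs, Jv, Pi.single_apply, Fin.ext_iff, Fin.ofNat] using (aux 2 5).symm
  · simpa [prs, Jv, Pi.single_apply, Fin.ext_iff, Fin.ofNat] using (aux 2 6).symm
  · simpa [prs, Jv, Pi.single_apply, Fin.ext_iff, Fin.ofNat] using (aux 2 7).symm
  · simpa [prs, Jv, Pi.single_apply, Fin.ext_iff, Fin.ofNat] using (aux 4 6).symm
  · simpa [prs, Jv, Pi.single_apply, Fin.ext_iff, Fin.ofNat] using (aux 4 7).symm

def nf : ℕ → ℤ × ℕ
  | 10 => (1, 5)
  | 6 => (-1, 9)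
  | 34 => (1, 17)
  | 18 => (-1, 33)
  | 130 => (1, 65)
  | 66 => (-1, 129)
  | 40 => (1, 20)
  | 24 => (-1, 36)
  | 136 => (1, 68)
  | 72 => (-1, 132)
  | 160 => (1, 80)
  | 96 => (-1, 144)
  | m => (1, m)

lemma nf_val (A : Form ℂ 8) (hJ : Jinv A) (m : ℕ) :
    A (Sm m) = ((nf m).1 : ℂ) * A (Sm (nf m).2) := by
  obtain ⟨h1, h2, h3, h4, h5, h6, h7, h8, h9, h10, h11, h12⟩ := hJ
  unfold nf
  split <;> simp [*]

def coefL (l : List (ℤ × ℕ)) (k : ℕ) : ℤ := (l.map (fun q => if q.2 = k then q.1 else 0)).sum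

lemma coef_sum (x : ℕ → ℂ) (l : List (ℤ × ℕ)) (hl : ∀ q ∈ l, q.2 < 256) :
    (l.map (fun q => (q.1 : ℂ) * x q.2)).sum = ∑ k ∈ Finset.range 256, (coefL l k : ℂ) * x k := by
  induction l with
  | nil => simp [coefL]
  | cons a l ih =>
    rw [List.map_cons, List.sum_cons, ih (fun q hq => hl q (List.mem_cons_of_mem _ hq))]
    have : ∀ k, ((coefL (a :: l) k : ℤ) : ℂ) * x k =
        (if a.2 = k then (a.1 : ℂ) * x k else 0) + (coefL l k : ℂ) * x k := by
      intro k
      simp only [coefL, List.map_cons, List.sum_cons]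
      split_ifs <;> push_cast <;> ring
    simp only [this, Finset.sum_add_distrib]
    congr 1
    rw [Finset.sum_ite_eq, if_pos (Finset.mem_range.2 (hl a List.mem_cons_self))]

lemma coef_eq (x : ℕ → ℂ) (l l' : List (ℤ × ℕ)) (hl : ∀ q ∈ l, q.2 < 256)
    (hl' : ∀ q ∈ l', q.2 < 256) (h : ∀ k < 256, coefL l k = coefL l' k) :
    (l.map (fun q => (q.1 : ℂ) * x q.2)).sum = (l'.map (fun q => (q.1 : ℂ) * x q.2)).sum := by
  rw [coef_sum x l hl, coef_sum x l' hl']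
  apply Finset.sum_congr rfl
  intro k hk
  rw [h k (Finset.mem_range.1 hk)]

def linL (p : ℕ × ℕ) : List (ℤ × ℕ) :=
  (nf (2 ^ p.1 + 2 ^ p.2)) :: (tl (255 - 2 ^ p.1 - 2 ^ p.2)).map (fun q =>
    (sg (p.1 + p.2 + 1) * q.1 * ph q.2.2 * (nf q.2.1).1, (nf q.2.1).2))

def linR (p : ℕ × ℕ) : List (ℤ × ℕ) :=
  [(omZ (2 ^ p.1 + 2 ^ p.2), 3), (omZ (2 ^ p.1 + 2 ^ p.2), 12),
   (omZ (2 ^ p.1 + 2 ^ p.2), 48), (omZ (2 ^ p.1 + 2 ^ p.2), 192)]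

lemma lin_dec : ∀ p ∈ prs, (∀ q ∈ linL p, q.2 < 256) ∧ (∀ q ∈ linR p, q.2 < 256) ∧
    ∀ k < 256, coefL (linL p) k = coefL (linR p) k := by decide +kernel

lemma linear (A : Form ℂ 8) (hA : isGrade 2 A) (hJ : Jinv A) (p : ℕ × ℕ) (hp : p ∈ prs) :
    A (Sm (2 ^ p.1 + 2 ^ p.2)) + hstar (wedge A PhiCY) (Sm (2 ^ p.1 + 2 ^ p.2)) =
    (A (Sm 3) + A (Sm 12) + A (Sm 48) + A (Sm 192)) * omegaCY (Sm (2 ^ p.1 + 2 ^ p.2)) := by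
  have hlt : 2 ^ p.1 + 2 ^ p.2 < 256 := by revert p; decide
  have hlt2 : 255 - 2 ^ p.1 - 2 ^ p.2 < 256 := by revert p; decide
  rw [hstar2 _ _ hp, wedge_tl _ _ hA _ hlt2, om_valZ _ hlt]
  obtain ⟨h1, h2, h3⟩ := lin_dec p hp
  have h := coef_eq (fun k => A (Sm k)) _ _ h1 h2 h3
  simp only [linL, linR, List.map_cons, List.sum_cons, List.map_nil, List.sum_nil,
    ← nf_val A hJ, List.map_map] at h
  rw [← List.sum_map_mul_left]
  refine Eq.trans ?_ (h.trans (by ring))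
  congr 2
  apply List.map_congr_left
  intro q hq
  rw [Phi_val _ (tl_lt ⟨_, hlt2⟩ q hq).2]
  simp only [Function.comp]
  rw [nf_val A hJ q.2.1]
  push_cast
  ring

def P4 (f : ℕ → ℂ) (a b c d : ℕ) : ℂ :=
  f (a + b) * f (c + d) - f (a + c) * f (b + d) + f (a + d) * f (b + c)

def P6 (f : ℕ → ℂ) (a b c d e g : ℕ) : ℂ :=
  f (a + b) * P4 f c d e g - f (a + c) * P4 f b d e g + f (a + d) * P4 f b c e g
  - f (a + e) * P4 f b c d g + f (a + g) * P4 f b c d e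


def bitsL (m : ℕ) : List ℕ := [1, 2, 4, 8, 16, 32, 64, 128].filter (fun i => m / i % 2 = 1)

def P6L (f : ℕ → ℂ) : List ℕ → ℂ
  | [a, b, c, d, e, g] => P6 f a b c d e g
  | _ => 0

def c6 (f : ℕ → ℂ) (m : ℕ) : ℂ := P6L f (bitsL m)

def ms6 : List ℕ := prs.map (fun p => 255 - 2 ^ p.1 - 2 ^ p.2)

def tl4 : List ℕ → List (ℤ × ℕ × ℕ)
  | [a, b, c, d] => [(1, a + b, c + d), (-1, a + c, b + d), (1, a + d, b + c),
      (1, b + c, a + d), (-1, b + d, a + c), (1, c + d, a + b)]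
  | _ => []

def quads : List (List ℕ) := ms4.map bitsL

lemma quads_dec : ∀ l ∈ quads, l.length = 4 ∧ l.sum < 256 ∧ tl l.sum = tl4 l := by decide +kernel

lemma square (F : Form ℂ 8) (hF : isGrade 2 F) (a b c d : ℕ) (h : [a, b, c, d] ∈ quads) :
    wedge F F (Sm (a + (b + (c + d)))) = 2 * P4 (fun k => F (Sm k)) a b c d := by
  obtain ⟨-, h1, h2⟩ := quads_dec _ h
  simp only [List.sum_cons, List.sum_nil, add_zero] at h1 h2
  rw [wedge_tl _ _ hF _ h1, h2]
  simp [tl4, P4]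
  ring

def tl6 : List ℕ → List (ℤ × ℕ × ℕ)
  | [a, b, c, d, e, g] => [(1, a + b, c + (d + (e + g))),
      (-1, a + c, b + (d + (e + g))),
      (1, a + d, b + (c + (e + g))),
      (-1, a + e, b + (c + (d + g))),
      (1, a + g, b + (c + (d + e))),
      (1, b + c, a + (d + (e + g))),
      (-1, b + d, a + (c + (e + g))),
      (1, b + e, a + (c + (d + g))),
      (-1, b + g, a + (c + (d + e))),
      (1, c + d, a + (b + (e + g))),
      (-1, c + e, a + (b + (d + g))),
      (1, c + g, a + (b + (d + e))),
      (1, d + e, a + (b + (c + g))),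
      (-1, d + g, a + (b + (c + e))),
      (1, e + g, a + (b + (c + d)))]
  | _ => []

def sub4 : List ℕ → List (List ℕ)
  | [a, b, c, d, e, g] => [[c, d, e, g],
      [b, d, e, g],
      [b, c, e, g],
      [b, c, d, g],
      [b, c, d, e],
      [a, d, e, g],
      [a, c, e, g],
      [a, c, d, g],
      [a, c, d, e],
      [a, b, e, g],
      [a, b, d, g],
      [a, b, d, e],
      [a, b, c, g],
      [a, b, c, e],
      [a, b, c, d]]
  | _ => []

lemma six_dec : ∀ m ∈ ms6, m < 256 ∧ (bitsL m).length = 6 ∧ tl m = tl6 (bitsL m) ∧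
    ∀ l ∈ sub4 (bitsL m), l ∈ quads := by decide +kernel

lemma cube (F : Form ℂ 8) (hF : isGrade 2 F) (m : ℕ) (hm : m ∈ ms6) :
    wedge F (wedge F F) (Sm m) = 6 * c6 (fun k => F (Sm k)) m := by
  obtain ⟨h1, h2, h3, h4⟩ := six_dec m hm
  rw [wedge_tl _ _ hF _ h1, h3, c6]
  generalize bitsL m = l at *
  match l, h2 with
  | [a, b, c, d, e, g], _ =>
    simp only [sub4, List.forall_mem_cons] at h4
    obtain ⟨q0, q1, q2, q3, q4, q5, q6, q7, q8, q9, q10, q11, q12, q13, q14, -⟩ := h4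
    simp only [tl6, List.map_cons, List.map_nil, List.sum_cons, List.sum_nil, P6L, P6,
      square F hF _ _ _ _ q0, square F hF _ _ _ _ q1, square F hF _ _ _ _ q2, square F hF _ _ _ _ q3, square F hF _ _ _ _ q4, square F hF _ _ _ _ q5, square F hF _ _ _ _ q6, square F hF _ _ _ _ q7, square F hF _ _ _ _ q8, square F hF _ _ _ _ q9, square F hF _ _ _ _ q10, square F hF _ _ _ _ q11, square F hF _ _ _ _ q12, square F hF _ _ _ _ q13, square F hF _ _ _ _ q14]
    simp only [P4, Int.cast_one, Int.cast_neg]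
    ring

set_option maxHeartbeats 4000000 in
lemma top (F : Form ℂ 8) (hF : isGrade 2 F) :
    wedge F (wedge F (wedge F F)) (Sm 255) =
      6 * (prs.map (fun p => ((sg (p.1 + p.2 + 1) : ℤ) : ℂ) * F (Sm (2 ^ p.1 + 2 ^ p.2)) *
        c6 (fun k => F (Sm k)) (255 - 2 ^ p.1 - 2 ^ p.2))).sum := by
  rw [wedge2 _ _ hF _ (by norm_num), ← List.sum_map_mul_left]
  congr 1
  apply List.map_congr_left
  intro p hp
  have h1 : 255 / 2 ^ p.1 % 2 = 1 ∧ 255 / 2 ^ p.2 % 2 = 1 ∧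
    sg (low 255 p.1 + low 255 p.2 + 1) = sg (p.1 + p.2 + 1) := by revert p; decide +kernel
  rw [term2, if_pos ⟨h1.1, h1.2.1⟩, cube F hF _ (List.mem_map.2 ⟨p, hp, rfl⟩), h1.2.2]
  ring

def AF (F : Form ℂ 8) : Form ℂ 8 := F + (6 : ℂ)⁻¹ • hstar (wedge F (wedge F F))

lemma AF_val (F : Form ℂ 8) (hF : isGrade 2 F) (p : ℕ × ℕ) (hp : p ∈ prs) :
    AF F (Sm (2 ^ p.1 + 2 ^ p.2)) = F (Sm (2 ^ p.1 + 2 ^ p.2)) +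
      ((sg (p.1 + p.2 + 1) : ℤ) : ℂ) * c6 (fun k => F (Sm k)) (255 - 2 ^ p.1 - 2 ^ p.2) := by
  simp only [AF, Pi.add_apply, Pi.smul_apply, smul_eq_mul]
  rw [hstar2 _ _ hp, cube F hF _ (List.mem_map.2 ⟨p, hp, rfl⟩)]
  ring

lemma bits6 (f : ℕ → ℂ) (m a b c d e g : ℕ) (h : bitsL m = [a, b, c, d, e, g]) :
    c6 f m = P6 f a b c d e g := by
  rw [c6, h]; rfl

set_option maxHeartbeats 4000000 in
lemma Jinv_AF (F : Form ℂ 8) (hF : isGrade 2 F) (hJ : Jinv F) : Jinv (AF F) := by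
  have aux := AF_val F hF
  obtain ⟨h1, h2, h3, h4, h5, h6, h7, h8, h9, h10, h11, h12⟩ := hJ
  simp only [prs, List.forall_mem_cons] at aux
  norm_num [sg, c6, bitsL, P6L, P6, P4] at aux
  unfold Jinv
  simp only [aux, h1, h2, h3, h4, h5, h6, h7, h8, h9, h10, h11, h12]
  refine ⟨?_, ?_, ?_, ?_, ?_, ?_, ?_, ?_, ?_, ?_, ?_, ?_⟩ <;> ring

set_option maxHeartbeats 4000000 in
lemma top_diff (F : Form ℂ 8) (hF : isGrade 2 F) (hM : isGrade 2 (omegaCY + F))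
    (hN : isGrade 2 (omegaCY + -F)) :
    wedge (omegaCY + F) (wedge (omegaCY + F) (wedge (omegaCY + F) (omegaCY + F))) (Sm 255) -
    wedge (omegaCY + -F) (wedge (omegaCY + -F) (wedge (omegaCY + -F) (omegaCY + -F))) (Sm 255) =
    48 * (AF F (Sm 3) + AF F (Sm 12) + AF F (Sm 48) + AF F (Sm 192)) := by
  have a1 := AF_val F hF (0, 1) (by decide)
  have a2 := AF_val F hF (2, 3) (by decide)
  have a3 := AF_val F hF (4, 5) (by decide)
  have a4 := AF_val F hF (6, 7) (by decide)
  norm_num [sg, c6, bitsL, P6L, P6, P4] at a1 a2 a3 a4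
  rw [top _ hM, top _ hN, a1, a2, a3, a4]
  simp [prs, sg, c6, bitsL, P6L, P6, P4, om_val]
  ring

lemma wedge_conj (α β : Form ℂ 8) (u : Finset (Fin 8)) :
    (starRingEnd ℂ) (wedge α β u) =
      wedge (fun s => (starRingEnd ℂ) (α s)) (fun s => (starRingEnd ℂ) (β s)) u := by
  simp [wedge, signMerge]

lemma omega_conj (F : Form ℂ 8) (hIm : ∀ s, (F s).re = 0) :
    (fun s => (starRingEnd ℂ) ((omegaCY + F) s)) = omegaCY + -F := by
  funext s
  simp only [Pi.add_apply, Pi.neg_apply, map_add]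
  congr 1
  · unfold omegaCY
    split_ifs <;> simp
  · apply Complex.ext <;> simp [hIm]

lemma sm255 : ∀ s : Finset (Fin 8), s.card = 8 → s = Sm 255 := by
  intro s hs
  have : s = Finset.univ := by
    rw [← Finset.card_eq_iff_eq_univ]; simpa using hs
  rw [this]; decide

/-- Lemma 7.2.  Let `F` be an `√-1 ℝ`-valued 2-form on `ℝ⁸ = ℂ⁴` with
`F(J·, J·) = F(·,·)` (i.e. `F^{0,2} = 0`).  Then `F` is a dHYM curvature with phase 1,
`Im (ω + F)⁴ = 0`, if and only if
`(F + (1/6) *F³) + *((F + (1/6) *F³) ∧ Φ) = 0`, i.e. `π²₇(F + (1/6) *F³) = 0`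
for the Cayley form `Φ = ω²/2 + Re Ω`. -/
theorem statement17 (F : Form ℂ 8) (h2 : isGrade 2 F)
    (hIm : ∀ s, (F s).re = 0)
    (hJ : ∀ v w : Fin 8 → ℂ, evalForm F ![Jv v, Jv w] = evalForm F ![v, w]) :
    (∀ s, ((wedge (omegaCY + F)
        (wedge (omegaCY + F) (wedge (omegaCY + F) (omegaCY + F)))) s).im = 0) ↔
    ((F + (6 : ℂ)⁻¹ • hstar (wedge F (wedge F F))) +
        hstar (wedge (F + (6 : ℂ)⁻¹ • hstar (wedge F (wedge F F))) PhiCY) = 0) := by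
  have hG : isGrade 2 (omegaCY + F) := isGrade_add isGrade_omegaCY h2
  have hN2 : isGrade 2 (-F) := fun s hs => by simp [h2 s hs]
  have hN : isGrade 2 (omegaCY + -F) := isGrade_add isGrade_omegaCY hN2
  have hFJ : Jinv F := Jrel F hJ
  have h6 := isGrade_wedge h2 (isGrade_wedge h2 h2)
  have hA : isGrade 2 (AF F) := isGrade_add h2 (isGrade_smul _ (isGrade_hstar h6 rfl))
  have hAJ := Jinv_AF F h2 hFJ
  have hd := top_diff F h2 hG hN
  have hc : (starRingEnd ℂ) (wedge (omegaCY + F) (wedge (omegaCY + F)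
      (wedge (omegaCY + F) (omegaCY + F))) (Sm 255)) =
      wedge (omegaCY + -F) (wedge (omegaCY + -F) (wedge (omegaCY + -F) (omegaCY + -F))) (Sm 255) := by
    simp only [wedge_conj, omega_conj F hIm]
  rw [← hc, Complex.sub_conj] at hd
  have hgr := isGrade_wedge hG (isGrade_wedge hG (isGrade_wedge hG hG))
  have hL : (∀ s, ((wedge (omegaCY + F)
        (wedge (omegaCY + F) (wedge (omegaCY + F) (omegaCY + F)))) s).im = 0) ↔
      AF F (Sm 3) + AF F (Sm 12) + AF F (Sm 48) + AF F (Sm 192) = 0 := by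
    constructor
    · intro h
      rw [h (Sm 255)] at hd
      simpa using hd.symm
    · intro h s
      by_cases hs : s.card = 8
      · rw [sm255 s hs]
        rw [h] at hd
        simpa using hd
      · rw [hgr s hs]; simp
  rw [hL]
  change _ ↔ AF F + hstar (wedge (AF F) PhiCY) = 0
  have hlin := linear (AF F) hA hAJ
  constructor
  · intro h
    funext s
    by_cases hs : s.card = 2
    · have : s ∈ (Finset.univ : Finset (Fin 8)).powersetCard 2 := by
        simp [Finset.mem_powersetCard, hs]
      rw [sm_pair, List.mem_toFinset, List.mem_map] at this
      obtain ⟨p, hp, rfl⟩ := this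
      rw [Pi.add_apply, hlin p hp, h]; simp
    · have hg : isGrade 2 (AF F + hstar (wedge (AF F) PhiCY)) :=
        isGrade_add hA (isGrade_hstar (isGrade_wedge hA isGrade_PhiCY) rfl)
      rw [hg s hs]; rfl
  · intro h
    have h' := hlin (0, 1) (by decide)
    rw [← Pi.add_apply, h, om_val _ (by norm_num)] at h'
    simpa using h'.symm

end FMpaper
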